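/- arXiv:1607.05035 — 2 statements merged into one kernel-verified Lean document; each statement's English description precedes it below -/
import Mathlib

section
/- There exists a constant c > 0 independent of the mesh size h and the spline degree p such that for every α ∈ {0,1}^2, the smoothing operator L_α (defined by L_{00} = (1+2σ) M_0 ⊗ M_0, L_{01} = M_0 ⊗ ((1+σ)M_1 + K_1), L_{10} = ((1+σ)M_1 + K_1) ⊗ M_0, L_{11} = M_1 ⊗ M_1 + K_1 ⊗ M_1 + M_1 ⊗ K_1, with σ = 12 h^{-2}) is spectrally bounded from above by c · Q_α′ (A + h^{-2} M ⊗ M) Q_α, i.e. ⟨L_α v, v⟩ ≤ c ⟨Q_α′(A + h^{-2} M⊗M)Q_α v, v⟩ for all v ∈ S_α. -/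
noncomputable section

open MeasureTheory Set

namespace SplineMG

/-- The `j`-th piece of the uniform partition of `[0,1]` into `m` subintervals of
length `h = 1/m`; the first and last pieces are extended to `-∞` resp. `+∞`
(the spline is extended polynomially outside `[0,1]`). -/
def pieceSet (m j : ℕ) : Set ℝ :=
  (if j = 0 then Iic ((1 : ℝ) / m) else Icc ((j : ℝ) / m) (((j : ℝ) + 1) / m)) ∪
  (if j = m - 1 then Ici (((m : ℝ) - 1) / m) else ∅)

/-- `u : ℝ → ℝ` belongs to the univariate spline space `S` of degree `p` and maximal
smoothness `C^{p-1}` on the uniform partition of `(0,1)` into `m` intervals of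
length `h = 1/m`. -/
def IsSpline (m p : ℕ) (u : ℝ → ℝ) : Prop :=
  ContDiffOn ℝ (p - 1 : ℕ) u (Ioo (0 : ℝ) 1) ∧
  ∀ j < m, ∃ q : Polynomial ℝ, q.natDegree ≤ p ∧ ∀ x ∈ pieceSet m j, u x = q.eval x

/-- `u` belongs to the subspace `S₀` of `S`: all odd derivatives of order `< p`
vanish at both endpoints. -/
def IsSpline0 (m p : ℕ) (u : ℝ → ℝ) : Prop :=
  IsSpline m p u ∧
  ∀ l : ℕ, 2 * l + 1 < p →
    iteratedDeriv (2 * l + 1) u 0 = 0 ∧ iteratedDeriv (2 * l + 1) u 1 = 0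

/-- The `L²(0,1)` inner product. -/
def ip0 (u v : ℝ → ℝ) : ℝ := ∫ x in Ioo (0 : ℝ) 1, u x * v x

/-- The squared `L²(0,1)` norm `‖u‖₀²`. -/
def l2normSq (u : ℝ → ℝ) : ℝ := ∫ x in Ioo (0 : ℝ) 1, u x ^ 2

/-- The `L²(0,1)` norm `‖u‖₀`. -/
def l2norm (u : ℝ → ℝ) : ℝ := Real.sqrt (l2normSq u)

/-- The squared `H¹(0,1)` seminorm `|u|₁²`. -/
def h1semiSq (u : ℝ → ℝ) : ℝ := ∫ x in Ioo (0 : ℝ) 1, deriv u x ^ 2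

/-- The `H¹(0,1)` seminorm `|u|₁`. -/
def h1semi (u : ℝ → ℝ) : ℝ := Real.sqrt (h1semiSq u)

/-- The squared full `H¹(0,1)` norm. -/
def h1normSq (u : ℝ → ℝ) : ℝ := l2normSq u + h1semiSq u

/-- `u` belongs to `S₁`, the `L²(0,1)`-orthogonal complement of `S₀` in `S`. -/
def IsSpline1 (m p : ℕ) (u : ℝ → ℝ) : Prop :=
  IsSpline m p u ∧ ∀ v, IsSpline0 m p v → ip0 u v = 0

/-- `v = Q₀ u` is the `L²(0,1)`-orthogonal projection of `u` onto `S₀`. -/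
def IsL2Proj0 (m p : ℕ) (u v : ℝ → ℝ) : Prop :=
  IsSpline0 m p v ∧ ∀ w, IsSpline0 m p w → ip0 (u - v) w = 0

/-- The component predicate: `false ↦ S₀`, `true ↦ S₁`. -/
def IsSplineC (m p : ℕ) : Bool → (ℝ → ℝ) → Prop
  | false => IsSpline0 m p
  | true => IsSpline1 m p

/-- The tensor-product spline space `S^d = S ⊗ ⋯ ⊗ S` on `(0,1)^d`. -/
def TensorSpline (d m p : ℕ) : Submodule ℝ ((Fin d → ℝ) → ℝ) :=
  Submodule.span ℝ {u | ∃ f : Fin d → ℝ → ℝ, (∀ i, IsSpline m p (f i)) ∧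
    u = fun x => ∏ i, f i (x i)}

/-- The subspace `S_α = S_{α₁} ⊗ ⋯ ⊗ S_{α_d}` of `S^d`, for `α ∈ {0,1}^d`
(`false ↦ 0`, `true ↦ 1`). -/
def TensorSplineSub (d m p : ℕ) (α : Fin d → Bool) : Submodule ℝ ((Fin d → ℝ) → ℝ) :=
  Submodule.span ℝ {u | ∃ f : Fin d → ℝ → ℝ, (∀ i, IsSplineC m p (α i) (f i)) ∧
    u = fun x => ∏ i, f i (x i)}

/-- The open unit cube `Ω = (0,1)^d`. -/
def cube (d : ℕ) : Set (Fin d → ℝ) := Set.univ.pi fun _ => Ioo (0 : ℝ) 1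

/-- The `i`-th partial derivative. -/
def pd (d : ℕ) (i : Fin d) (u : (Fin d → ℝ) → ℝ) : (Fin d → ℝ) → ℝ :=
  fun x => deriv (fun t => u (Function.update x i t)) (x i)

/-- The `L²(Ω)` inner product on the unit cube. -/
def ipd (d : ℕ) (u v : (Fin d → ℝ) → ℝ) : ℝ := ∫ x in cube d, u x * v x

/-- The squared `L²(Ω)` norm. -/
def l2normSqD (d : ℕ) (u : (Fin d → ℝ) → ℝ) : ℝ := ∫ x in cube d, u x ^ 2

/-- The bilinear form `a(u,v) = ∫_Ω (∇u·∇v + uv) dx`. -/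
def aForm (d : ℕ) (u v : (Fin d → ℝ) → ℝ) : ℝ :=
  ∫ x in cube d, (∑ i, pd d i u x * pd d i v x) + u x * v x

/-- The squared `H¹(Ω)` seminorm. -/
def h1semiSqD (d : ℕ) (u : (Fin d → ℝ) → ℝ) : ℝ :=
  ∫ x in cube d, ∑ i, pd d i u x ^ 2

/-- The squared full `H¹(Ω)` norm. -/
def h1normSqD (d : ℕ) (u : (Fin d → ℝ) → ℝ) : ℝ := l2normSqD d u + h1semiSqD d u

/-- `v = Q_α u` is the `L²(Ω)`-orthogonal projection of `u` onto `S_α`. -/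
def IsL2ProjSub (d m p : ℕ) (α : Fin d → Bool) (u v : (Fin d → ℝ) → ℝ) : Prop :=
  v ∈ TensorSplineSub d m p α ∧ ∀ w ∈ TensorSplineSub d m p α, ipd d (u - v) w = 0

/-- The coarse tensor-product spline space `(S_c)^d` (with `m/2` knot spans of
width `2h` per direction). -/
def TensorSplineCoarse (d m p : ℕ) : Submodule ℝ ((Fin d → ℝ) → ℝ) :=
  TensorSpline d (m / 2) p

/-- `v = T_c u` is the `a(·,·)`-orthogonal (Galerkin) projection of `u` onto `(S_c)^d`. -/
def IsGalerkinCoarseProj (d m p : ℕ) (u v : (Fin d → ℝ) → ℝ) : Prop :=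
  v ∈ TensorSplineCoarse d m p ∧ ∀ w ∈ TensorSplineCoarse d m p, aForm d (u - v) w = 0

end SplineMG

namespace SplineMG

/-!
Direction by direction, the smoother either keeps the stiffness term `‖∂ᵢv‖₀²` or replaces it by
`σ‖v‖₀²`. Bounding each choice by the sum of both and adding up over the directions yields
`a(v,v) + d σ ‖v‖₀²`, and `σ` is proportional to `h⁻²`. This rests on splitting `a(v,v)` into its
separate integrals, which must therefore be finite: off the finitely many knots a spline agrees
locally with one of finitely many polynomials, so it and its derivative are essentially bounded, and
square-integrability passes to products and to linear combinations.
-/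

open scoped Topology

section MemLpProd

variable {ι : Type*} [Fintype ι] {E : ι → Type*} [∀ i, MeasurableSpace (E i)]
  {μ : ∀ i, Measure (E i)} [∀ i, SigmaFinite (μ i)] {𝕜 : Type*} [RCLike 𝕜]

theorem memLp_fintype_prod {r : ENNReal} (hr₀ : r ≠ 0) (hr : r ≠ ⊤) {f : ∀ i, E i → 𝕜}
    (hf : ∀ i, MemLp (f i) r (μ i)) : MemLp (fun x => ∏ i, f i (x i)) r (Measure.pi μ) := by
  have hmeas : AEStronglyMeasurable (fun x : ∀ i, E i => ∏ i, f i (x i)) (Measure.pi μ) :=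
    Finset.aestronglyMeasurable_fun_prod _ fun i _ =>
      (hf i).1.comp_quasiMeasurePreserving (Measure.quasiMeasurePreserving_eval μ i)
  rw [← integrable_norm_rpow_iff hmeas hr₀ hr]
  have hprod := Integrable.fintype_prod_dep fun i => (hf i).integrable_norm_rpow hr₀ hr
  refine hprod.congr (.of_forall fun x => ?_)
  simp only [norm_prod]
  exact Real.finsetProd_rpow _ _ (fun i _ => norm_nonneg _) _

end MemLpProd

theorem prod_apply_update {ι M : Type*} [Fintype ι] [DecidableEq ι] [CommMonoid M] {E : ι → Type*}
    (f : ∀ i, E i → M) (x : ∀ i, E i) (i : ι) (t : E i) :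
    ∏ j, f j (Function.update x i t j) = f i t * ∏ j ∈ Finset.univ \ {i}, f j (x j) := by
  simp only [Function.apply_update f, Finset.prod_update_of_mem (Finset.mem_univ i)]

section Univariate

theorem exists_norm_eval_le_of_isCompact (P : Finset (Polynomial ℝ)) {K : Set ℝ}
    (hK : IsCompact K) : ∃ C : ℝ, ∀ q ∈ P, ∀ x ∈ K, ‖q.eval x‖ ≤ C := by
  choose B hB using fun q : Polynomial ℝ =>
    hK.exists_bound_of_continuousOn q.continuous.continuousOn
  obtain ⟨C, hC⟩ := (P.image B).exists_le
  exact ⟨C, fun q hq x hx => (hB q x hx).trans (hC _ (Finset.mem_image_of_mem B hq))⟩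

theorem memLp_of_ae_exists_eq_eval {μ : Measure ℝ} [IsFiniteMeasureOnCompacts μ]
    {r : ENNReal} {s : Set ℝ} (hs : MeasurableSet s) (hs' : Bornology.IsBounded s)
    {f : ℝ → ℝ} (hf : AEStronglyMeasurable f (μ.restrict s)) (P : Finset (Polynomial ℝ))
    (hP : ∀ᵐ x ∂μ.restrict s, ∃ q ∈ P, f x = q.eval x) :
    MemLp f r (μ.restrict s) := by
  obtain ⟨C, hC⟩ := exists_norm_eval_le_of_isCompact P hs'.isCompact_closure
  have : IsFiniteMeasure (μ.restrict s) := ⟨by simpa using hs'.measure_lt_top⟩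
  refine MemLp.of_bound hf C ?_
  filter_upwards [hP, ae_restrict_mem hs] with x ⟨q, hq, hfq⟩ hx
  exact hfq ▸ hC q hq x (subset_closure hx)

theorem Ioo_subset_pieceSet (m j : ℕ) :
    Ioo ((j : ℝ) / m) (((j : ℝ) + 1) / m) ⊆ pieceSet m j := by
  refine fun x hx => Or.inl ?_
  split_ifs with hj
  · subst hj
    simpa using hx.2.le
  · exact Ioo_subset_Icc_self hx

theorem ae_exists_mem_Ioo_knots {m : ℕ} (hm : 1 ≤ m) :
    ∀ᵐ x ∂volume.restrict (Ioo (0 : ℝ) 1),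
      ∃ j < m, x ∈ Ioo ((j : ℝ) / m) (((j : ℝ) + 1) / m) := by
  have hm₀ : (0 : ℝ) < m := by exact_mod_cast hm
  have hknots := (countable_range fun j : ℕ => (j : ℝ) / m).ae_notMem
    (volume.restrict (Ioo (0 : ℝ) 1))
  filter_upwards [hknots, ae_restrict_mem measurableSet_Ioo] with x hx_knot ⟨hx₀, hx₁⟩
  have hxm : 0 ≤ x * m := by positivity
  refine ⟨⌊x * m⌋₊, (Nat.floor_lt hxm).2 (mul_lt_of_lt_one_left hm₀ hx₁), ?_, ?_⟩
  · exact ((div_le_iff₀ hm₀).2 (Nat.floor_le hxm)).lt_of_ne fun h => hx_knot ⟨_, h⟩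
  · exact (lt_div_iff₀ hm₀).2 (Nat.lt_floor_add_one _)

namespace IsSpline

variable {m p : ℕ} {u : ℝ → ℝ}

theorem exists_finset_ae_eventuallyEq_eval (hm : 1 ≤ m) (hu : IsSpline m p u) :
    ∃ P : Finset (Polynomial ℝ), ∀ᵐ x ∂volume.restrict (Ioo (0 : ℝ) 1),
      ∃ q ∈ P, u =ᶠ[𝓝 x] fun y => q.eval y := by
  choose! q _ hq using hu.2
  refine ⟨(Finset.range m).image q, ?_⟩
  filter_upwards [ae_exists_mem_Ioo_knots hm] with x ⟨j, hj, hx⟩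
  refine ⟨q j, Finset.mem_image_of_mem q (Finset.mem_range.2 hj), ?_⟩
  filter_upwards [Ioo_mem_nhds hx.1 hx.2] with y hy
  exact hq j hj y (Ioo_subset_pieceSet m j hy)

theorem ae_differentiableAt (hm : 1 ≤ m) (hu : IsSpline m p u) :
    ∀ᵐ x ∂volume.restrict (Ioo (0 : ℝ) 1), DifferentiableAt ℝ u x := by
  obtain ⟨P, hP⟩ := hu.exists_finset_ae_eventuallyEq_eval hm
  filter_upwards [hP] with x ⟨q, _, huq⟩
  exact q.differentiableAt.congr_of_eventuallyEq huq

theorem memLp (hm : 1 ≤ m) (hu : IsSpline m p u) (r : ENNReal) :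
    MemLp u r (volume.restrict (Ioo (0 : ℝ) 1)) := by
  obtain ⟨P, hP⟩ := hu.exists_finset_ae_eventuallyEq_eval hm
  refine memLp_of_ae_exists_eq_eval measurableSet_Ioo (Metric.isBounded_Ioo 0 1)
    (hu.1.continuousOn.aestronglyMeasurable measurableSet_Ioo) P ?_
  filter_upwards [hP] with x ⟨q, hq, huq⟩
  exact ⟨q, hq, huq.eq_of_nhds⟩

theorem memLp_deriv (hm : 1 ≤ m) (hu : IsSpline m p u) (r : ENNReal) :
    MemLp (deriv u) r (volume.restrict (Ioo (0 : ℝ) 1)) := by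
  obtain ⟨P, hP⟩ := hu.exists_finset_ae_eventuallyEq_eval hm
  refine memLp_of_ae_exists_eq_eval measurableSet_Ioo (Metric.isBounded_Ioo 0 1)
    (measurable_deriv u).aestronglyMeasurable (P.image Polynomial.derivative) ?_
  filter_upwards [hP] with x ⟨q, hq, huq⟩
  exact ⟨_, Finset.mem_image_of_mem _ hq, huq.deriv_eq.trans q.deriv⟩

end IsSpline

theorem IsSplineC.isSpline {m p : ℕ} {b : Bool} {u : ℝ → ℝ} (hu : IsSplineC m p b u) :
    IsSpline m p u := by
  cases b <;> exact hu.1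

end Univariate

section Tensor

variable {d : ℕ}

theorem volume_restrict_cube (d : ℕ) :
    (volume : Measure (Fin d → ℝ)).restrict (cube d) =
      Measure.pi fun _ => volume.restrict (Ioo (0 : ℝ) 1) := by
  rw [cube, volume_pi, Measure.restrict_pi_pi]

theorem pd_prod (f : Fin d → ℝ → ℝ) (i : Fin d) :
    pd d i (fun x => ∏ j, f j (x j)) =
      fun x => ∏ j, Function.update f i (deriv (f i)) j (x j) := by
  ext x
  simp only [pd, prod_apply_update, deriv_mul_const_field',
    Function.apply_update fun j (g : ℝ → ℝ) => g (x j),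
    Finset.prod_update_of_mem (Finset.mem_univ i)]

/-- The square-integrable functions on `Ω = (0,1)^d` whose classical partial derivatives exist
almost everywhere and are square-integrable. A pointwise stand-in for a broken `H¹(Ω)`: it contains
the tensor-product splines, and on it `pd` is linear up to null sets, so that every integral
occurring in `aForm` is a genuine one. -/
def brokenH1 (d : ℕ) : Submodule ℝ ((Fin d → ℝ) → ℝ) where
  carrier := {v | MemLp v 2 (volume.restrict (cube d)) ∧ ∀ i,
    MemLp (pd d i v) 2 (volume.restrict (cube d)) ∧
    ∀ᵐ x ∂volume.restrict (cube d), DifferentiableAt ℝ (fun t => v (Function.update x i t)) (x i)}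
  zero_mem' := by
    refine ⟨MemLp.zero, fun i => ⟨?_, by simp⟩⟩
    have pd_zero : pd d i 0 = 0 := by ext x; simp [pd]
    rw [pd_zero]
    exact MemLp.zero
  add_mem' := by
    rintro u v ⟨hu, hu'⟩ ⟨hv, hv'⟩
    refine ⟨hu.add hv, fun i => ⟨((hu' i).1.add (hv' i).1).ae_eq ?_, ?_⟩⟩ <;>
      filter_upwards [(hu' i).2, (hv' i).2] with x hux hvx
    · exact (deriv_fun_add hux hvx).symm
    · exact hux.fun_add hvx
  smul_mem' := by
    rintro a v ⟨hv, hv'⟩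
    refine ⟨hv.const_smul a, fun i => ⟨((hv' i).1.const_smul a).ae_eq ?_, ?_⟩⟩ <;>
      filter_upwards [(hv' i).2] with x hvx
    · exact (deriv_fun_const_smul a hvx).symm
    · exact hvx.fun_const_smul a

theorem prod_mem_brokenH1 {f : Fin d → ℝ → ℝ}
    (hf : ∀ i, MemLp (f i) 2 (volume.restrict (Ioo (0 : ℝ) 1)))
    (hf' : ∀ i, MemLp (deriv (f i)) 2 (volume.restrict (Ioo (0 : ℝ) 1)))
    (hdiff : ∀ i, ∀ᵐ x ∂volume.restrict (Ioo (0 : ℝ) 1), DifferentiableAt ℝ (f i) x) :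
    (fun x => ∏ i, f i (x i)) ∈ brokenH1 d := by
  have memLp_prod {g : Fin d → ℝ → ℝ}
      (hg : ∀ i, MemLp (g i) 2 (volume.restrict (Ioo (0 : ℝ) 1))) :
      MemLp (fun x => ∏ i, g i (x i)) 2 (volume.restrict (cube d)) :=
    volume_restrict_cube d ▸ memLp_fintype_prod two_ne_zero ENNReal.ofNat_ne_top hg
  refine ⟨memLp_prod hf, fun i => ⟨?_, ?_⟩⟩
  · rw [pd_prod]
    refine memLp_prod fun j => ?_
    rcases eq_or_ne j i with rfl | hji
    · simpa using hf' j
    · simpa [hji] using hf j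
  · rw [volume_restrict_cube]
    filter_upwards [(Measure.quasiMeasurePreserving_eval _ i).ae (hdiff i)] with x hx
    simp only [prod_apply_update]
    exact hx.mul_const _

theorem tensorSpline_le_brokenH1 {m : ℕ} (hm : 1 ≤ m) (d p : ℕ) :
    TensorSpline d m p ≤ brokenH1 d := by
  refine Submodule.span_le.2 ?_
  rintro _ ⟨f, hf, rfl⟩
  exact prod_mem_brokenH1 (fun i => (hf i).memLp hm 2) (fun i => (hf i).memLp_deriv hm 2)
    fun i => (hf i).ae_differentiableAt hm

theorem tensorSplineSub_le_tensorSpline {m p : ℕ} {α : Fin d → Bool} :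
    TensorSplineSub d m p α ≤ TensorSpline d m p :=
  Submodule.span_mono fun _ ⟨f, hf, hv⟩ => ⟨f, fun i => (hf i).isSpline, hv⟩

end Tensor

section Smoother

variable {d : ℕ} {v : (Fin d → ℝ) → ℝ}

theorem l2normSqD_nonneg (v : (Fin d → ℝ) → ℝ) : 0 ≤ l2normSqD d v :=
  integral_nonneg fun _ => sq_nonneg _

theorem aForm_self_nonneg (v : (Fin d → ℝ) → ℝ) : 0 ≤ aForm d v v :=
  integral_nonneg fun _ =>
    add_nonneg (Finset.sum_nonneg fun _ _ => mul_self_nonneg _) (mul_self_nonneg _)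

theorem aForm_self_eq (hv : v ∈ brokenH1 d) :
    aForm d v v = (∑ i, ∫ x in cube d, pd d i v x ^ 2) + l2normSqD d v := by
  have hpd : ∀ i ∈ Finset.univ,
      Integrable (fun x => pd d i v x ^ 2) (volume.restrict (cube d)) :=
    fun i _ => (hv.2 i).1.integrable_sq
  simp only [aForm, l2normSqD, ← sq]
  rw [integral_add (integrable_finsetSum _ hpd) hv.1.integrable_sq, integral_finsetSum _ hpd]

/-- The quadratic form `⟨L_α v, v⟩` of the local smoother on `(0,1)^d` with parameter `σ`: in each
direction `i` the stiffness term `‖∂ᵢv‖₀²` is kept where `αᵢ = 1` and replaced by `σ‖v‖₀²` where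
`αᵢ = 0`. The projections `Q_α` are left out, being the identity on `S_α`. -/
def localSmootherForm (d : ℕ) (σ : ℝ) (α : Fin d → Bool) (v : (Fin d → ℝ) → ℝ) : ℝ :=
  l2normSqD d v + ∑ i, if α i then ∫ x in cube d, pd d i v x ^ 2 else σ * l2normSqD d v

theorem localSmootherForm_le_aForm_add (hv : v ∈ brokenH1 d) {σ : ℝ} (hσ : 0 ≤ σ)
    (α : Fin d → Bool) :
    localSmootherForm d σ α v ≤ aForm d v v + d * σ * l2normSqD d v := by
  have hmass : 0 ≤ σ * l2normSqD d v := mul_nonneg hσ (l2normSqD_nonneg v)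
  have hdir (i : Fin d) : (if α i then ∫ x in cube d, pd d i v x ^ 2 else σ * l2normSqD d v) ≤
      (∫ x in cube d, pd d i v x ^ 2) + σ * l2normSqD d v := by
    have hstiff : 0 ≤ ∫ x in cube d, pd d i v x ^ 2 := integral_nonneg fun _ => sq_nonneg _
    split_ifs <;> linarith
  calc localSmootherForm d σ α v
      ≤ l2normSqD d v + ∑ i, ((∫ x in cube d, pd d i v x ^ 2) + σ * l2normSqD d v) :=
        add_le_add_right (Finset.sum_le_sum fun i _ => hdir i) _
    _ = aForm d v v + d * σ * l2normSqD d v := by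
        rw [aForm_self_eq hv, Finset.sum_add_distrib, Finset.sum_const, Finset.card_univ,
          Fintype.card_fin, nsmul_eq_mul]
        ring

end Smoother

theorem local_smoother_upper_bounds_2d_general {d m p : ℕ} (hm : 1 ≤ m) {κ : ℝ} (hκ : 0 ≤ κ)
    (α : Fin d → Bool) {v : (Fin d → ℝ) → ℝ} (hv : v ∈ TensorSpline d m p) :
    localSmootherForm d (κ * (m : ℝ) ^ 2) α v ≤
      (κ * d + 1) * (aForm d v v + (m : ℝ) ^ 2 * l2normSqD d v) := by
  have hmass : 0 ≤ (m : ℝ) ^ 2 * l2normSqD d v := mul_nonneg (sq_nonneg _) (l2normSqD_nonneg v)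
  have hform : 0 ≤ κ * d * aForm d v v := mul_nonneg (by positivity) (aForm_self_nonneg v)
  calc localSmootherForm d (κ * (m : ℝ) ^ 2) α v
      ≤ aForm d v v + d * (κ * (m : ℝ) ^ 2) * l2normSqD d v :=
        localSmootherForm_le_aForm_add (tensorSpline_le_brokenH1 hm d p hv) (by positivity) α
    _ ≤ (κ * d + 1) * (aForm d v v + (m : ℝ) ^ 2 * l2normSqD d v) := by linarith

/-- there is a constant `c > 0` independent of `h = 1/m` and `p`
such that each local smoother `L_α` (with `σ = 12h⁻² = 12m²`) is spectrally bounded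
from above by `c·Q_α′(A + h⁻²M⊗M)Q_α` on `S_α`, i.e. in quadratic form:
`⟨L_α v, v⟩ ≤ c·(a(v,v) + h⁻²‖v‖₀²)` for all `v ∈ S_α`, for each `α ∈ {0,1}²`. -/
theorem local_smoother_upper_bounds_2d :
    ∃ c : ℝ, 0 < c ∧ ∀ m p : ℕ, 1 ≤ m → 1 ≤ p →
      (∀ v, v ∈ TensorSplineSub 2 m p ![false, false] →
        (1 + 2 * (12 * (m : ℝ) ^ 2)) * l2normSqD 2 v ≤
          c * (aForm 2 v v + (m : ℝ) ^ 2 * l2normSqD 2 v)) ∧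
      (∀ v, v ∈ TensorSplineSub 2 m p ![false, true] →
        (1 + 12 * (m : ℝ) ^ 2) * l2normSqD 2 v + (∫ x in cube 2, pd 2 1 v x ^ 2) ≤
          c * (aForm 2 v v + (m : ℝ) ^ 2 * l2normSqD 2 v)) ∧
      (∀ v, v ∈ TensorSplineSub 2 m p ![true, false] →
        (1 + 12 * (m : ℝ) ^ 2) * l2normSqD 2 v + (∫ x in cube 2, pd 2 0 v x ^ 2) ≤
          c * (aForm 2 v v + (m : ℝ) ^ 2 * l2normSqD 2 v)) ∧
      (∀ v, v ∈ TensorSplineSub 2 m p ![true, true] →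
        l2normSqD 2 v + (∫ x in cube 2, pd 2 0 v x ^ 2) +
            (∫ x in cube 2, pd 2 1 v x ^ 2) ≤
          c * (aForm 2 v v + (m : ℝ) ^ 2 * l2normSqD 2 v)) := by
  refine ⟨12 * (2 : ℕ) + 1, by norm_num, fun m p hm _ => ?_⟩
  have bound (α : Fin 2 → Bool) (v) (hv : v ∈ TensorSplineSub 2 m p α) :=
    local_smoother_upper_bounds_2d_general hm (by norm_num : (0 : ℝ) ≤ 12) α
      (tensorSplineSub_le_tensorSpline hv)
  refine ⟨fun v hv => ?_, fun v hv => ?_, fun v hv => ?_, fun v hv => ?_⟩ <;>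
    refine le_of_eq_of_le ?_ (bound _ v hv) <;>
    simp only [localSmootherForm, Fin.sum_univ_two, Matrix.cons_val_zero, Matrix.cons_val_one,
      Bool.false_eq_true, if_true, if_false] <;> ring

end SplineMG
end
end

section
/- Let A, M ∈ ℝ^{n×n} be symmetric positive definite, let T ∈ ℝ^{n×n} be an A-orthogonal projector onto a subspace W ⊆ ℝ^n (i.e. T² = T, range(T) = W, and AT = TᵀA), and let θ > 0. Then the two statements '‖Tu‖_M ≤ θ ‖u‖_A for all u ∈ ℝ^n' and '‖Tu‖_A ≤ θ ‖u‖_{AM^{-1}A} for all u ∈ ℝ^n' are equivalent. -/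
noncomputable section

open Matrix

/-!
The adjoint of `T : (ℝⁿ, ‖·‖_A) → (ℝⁿ, ‖·‖_M)` is `T A⁻¹ M`, because `T` is `A`-self-adjoint, and a
map and its adjoint satisfy the same norm bounds. The substitution `v = M⁻¹ A u` turns the bound
`‖T A⁻¹ M v‖_A ≤ θ ‖v‖_M` on the adjoint into `‖T u‖_A ≤ θ ‖u‖_{A M⁻¹ A}`.
-/

open LinearMap (BilinForm)

section EnergyNorm

variable {V W X : Type*} [AddCommGroup V] [Module ℝ V] [AddCommGroup W] [Module ℝ W]
  {B : BilinForm ℝ V} {C : BilinForm ℝ W}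

/-- The energy norm `‖x‖_B = √(B x x)` of a bilinear form `B`, meant for positive semidefinite `B`
(the square root of a negative real is `0`). The paper's `‖·‖_A` for a matrix `A` is
`energyNorm A.toBilin'`. -/
def energyNorm (B : BilinForm ℝ V) (x : V) : ℝ := √(B x x)

lemma energyNorm_nonneg (B : BilinForm ℝ V) (x : V) : 0 ≤ energyNorm B x := Real.sqrt_nonneg _

lemma energyNorm_mul_self (hB : B.IsPosSemidef) (x : V) :
    energyNorm B x * energyNorm B x = B x x :=
  Real.mul_self_sqrt (hB.nonneg x)

lemma bilinForm_apply_le_energyNorm_mul_energyNorm (hB : B.IsPosSemidef) (x y : V) :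
    B x y ≤ energyNorm B x * energyNorm B y := by
  have cauchy_schwarz : B x y ^ 2 ≤ B x x * B y y :=
    BilinForm.apply_sq_le_of_symm B hB.nonneg (BilinForm.isSymm_iff.1 hB.isSymm) x y
  calc B x y ≤ √(B x x * B y y) := Real.le_sqrt_of_sq_le cauchy_schwarz
    _ = energyNorm B x * energyNorm B y := Real.sqrt_mul (hB.nonneg x) _

lemma energyNorm_le_of_apply_self_le (hB : B.IsPosSemidef) {x : V} {r : ℝ} (hr : 0 ≤ r)
    (h : B x x ≤ energyNorm B x * r) : energyNorm B x ≤ r := by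
  rcases (energyNorm_nonneg B x).eq_or_lt with hzero | hpos
  · exact hzero ▸ hr
  · exact le_of_mul_le_mul_left ((energyNorm_mul_self hB x).trans_le h) hpos

/-- With `p = id` this says that a map `f` and its adjoint `g` satisfy the same norm bounds; the
reparametrization `p` allows the adjoint to be known only as `g ∘ p⁻¹`. -/
theorem energyNorm_le_iff_energyNorm_adjoint_le (hB : B.IsPosSemidef) (hC : C.IsPosSemidef)
    {f : V → W} {g : X → V} {p : X → W} (hp : p.Surjective)
    (hadj : ∀ v x, C (f v) (p x) = B v (g x)) {θ : ℝ} (hθ : 0 ≤ θ) :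
    (∀ v, energyNorm C (f v) ≤ θ * energyNorm B v) ↔
      ∀ x, energyNorm B (g x) ≤ θ * energyNorm C (p x) := by
  constructor
  · intro hf x
    refine energyNorm_le_of_apply_self_le hB (mul_nonneg hθ (energyNorm_nonneg C _)) ?_
    calc B (g x) (g x) = C (f (g x)) (p x) := (hadj _ _).symm
      _ ≤ energyNorm C (f (g x)) * energyNorm C (p x) :=
        bilinForm_apply_le_energyNorm_mul_energyNorm hC _ _
      _ ≤ θ * energyNorm B (g x) * energyNorm C (p x) :=
        mul_le_mul_of_nonneg_right (hf _) (energyNorm_nonneg C _)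
      _ = energyNorm B (g x) * (θ * energyNorm C (p x)) := by ring
  · intro hg v
    obtain ⟨x, hx⟩ := hp (f v)
    refine energyNorm_le_of_apply_self_le hC (mul_nonneg hθ (energyNorm_nonneg B _)) ?_
    calc C (f v) (f v) = B v (g x) := by rw [← hadj, hx]
      _ ≤ energyNorm B v * energyNorm B (g x) :=
        bilinForm_apply_le_energyNorm_mul_energyNorm hB _ _
      _ ≤ energyNorm B v * (θ * energyNorm C (f v)) :=
        mul_le_mul_of_nonneg_left (hx ▸ hg x) (energyNorm_nonneg B _)
      _ = energyNorm C (f v) * (θ * energyNorm B v) := by ring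

end EnergyNorm

section Matrix

variable {ι : Type*} [Fintype ι] [DecidableEq ι] {A M T : Matrix ι ι ℝ}

lemma energyNorm_toBilin' (A : Matrix ι ι ℝ) (u : ι → ℝ) :
    energyNorm A.toBilin' u = √(u ⬝ᵥ (A *ᵥ u)) := by
  rw [energyNorm, toBilin'_apply']

lemma isPosSemidef_toBilin' (hA : A.PosSemidef) : A.toBilin'.IsPosSemidef where
  isSymm := isSymm_toBilin'_iff_isSymm.2 (isHermitian_iff_isSymm.1 hA.isHermitian)
  nonneg u := by
    simpa only [toBilin'_apply', star_trivial] using hA.dotProduct_mulVec_nonneg u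

lemma toBilin'_mulVec_inv_mul_mulVec (hM : IsUnit M.det) (hAT : A * T = Tᵀ * A) (u v : ι → ℝ) :
    M.toBilin' (T *ᵥ u) ((M⁻¹ * A) *ᵥ v) = A.toBilin' u (T *ᵥ v) := by
  simp only [toBilin'_apply', mulVec_mulVec, mul_nonsing_inv_cancel_left _ _ hM, hAT]
  rw [← mulVec_mulVec, dotProduct_mulVec u, vecMul_transpose]

lemma energyNorm_inv_mul_mulVec (hA : A.IsSymm) (hM : IsUnit M.det) (u : ι → ℝ) :
    energyNorm M.toBilin' ((M⁻¹ * A) *ᵥ u) = energyNorm (A * M⁻¹ * A).toBilin' u := by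
  simp only [energyNorm_toBilin', mulVec_mulVec, mul_nonsing_inv_cancel_left _ _ hM]
  rw [dotProduct_comm, Matrix.mul_assoc, ← mulVec_mulVec _ A, dotProduct_mulVec u,
    ← mulVec_transpose, hA.eq]

theorem aubin_nitsche_duality_general (hA : A.PosDef) (hM : M.PosDef) (hAT : A * T = Tᵀ * A)
    {θ : ℝ} (hθ : 0 ≤ θ) :
    (∀ u, energyNorm M.toBilin' (T *ᵥ u) ≤ θ * energyNorm A.toBilin' u) ↔
      ∀ u, energyNorm A.toBilin' (T *ᵥ u) ≤ θ * energyNorm (A * M⁻¹ * A).toBilin' u := by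
  have hA_form := isPosSemidef_toBilin' hA.posSemidef
  have hM_form := isPosSemidef_toBilin' hM.posSemidef
  have hA_symm : A.IsSymm := isHermitian_iff_isSymm.1 hA.isHermitian
  have hM_det : IsUnit M.det := hM.det_pos.ne'.isUnit
  have hsurj : Function.Surjective ((M⁻¹ * A) *ᵥ ·) :=
    mulVec_surjective_iff_isUnit.2 (hM.inv.isUnit.mul hA.isUnit)
  simp only [← energyNorm_inv_mul_mulVec hA_symm hM_det]
  exact energyNorm_le_iff_energyNorm_adjoint_le hA_form hM_form hsurj
    (toBilin'_mulVec_inv_mul_mulVec hM_det hAT) hθ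

end Matrix

/-- Lemma `lemma:dual`: let `A, M ∈ ℝ^{n×n}` be symmetric positive
definite, `T` an `A`-orthogonal projector onto a subspace `W ⊆ ℝⁿ` (i.e. `T² = T`,
`range(T) = W`, and `AT = TᵀA`), and `θ > 0`.  Then
`‖Tu‖_M ≤ θ‖u‖_A` for all `u` is equivalent to `‖Tu‖_A ≤ θ‖u‖_{AM⁻¹A}` for all `u`. -/
theorem aubin_nitsche_duality (n : ℕ) (A M T : Matrix (Fin n) (Fin n) ℝ)
    (hA : A.PosDef) (hM : M.PosDef)
    (W : Submodule ℝ (Fin n → ℝ))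
    (hproj : T * T = T)
    (hrange : LinearMap.range T.mulVecLin = W)
    (hAorth : A * T = Tᵀ * A)
    (θ : ℝ) (hθ : 0 < θ) :
    (∀ u : Fin n → ℝ,
        Real.sqrt ((T *ᵥ u) ⬝ᵥ (M *ᵥ (T *ᵥ u))) ≤ θ * Real.sqrt (u ⬝ᵥ (A *ᵥ u))) ↔
    (∀ u : Fin n → ℝ,
        Real.sqrt ((T *ᵥ u) ⬝ᵥ (A *ᵥ (T *ᵥ u))) ≤
          θ * Real.sqrt (u ⬝ᵥ ((A * M⁻¹ * A) *ᵥ u))) := by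
  simpa only [energyNorm_toBilin'] using aubin_nitsche_duality_general hA hM hAorth hθ.le
end
end
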